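/- Let s ≥ 6 and n = T_s + 6. Then there is exactly one partition λ of n with deg(λ) = Δ_n, namely λ = (s+2, s, s−2, s−3, ..., 3, 2, 2, 1, 1) (the staircase δ_s with its two largest gaps equal to 2 and the parts 2 and 1 each doubled), and this unique maximizer satisfies A(λ) = B(λ) = 2 and is self-conjugate. -/

import Mathlib

/-!
Split a partition of `n` into the set `D` of its part sizes and the multiset `R` of the remaining
copies. The elements of `D` and the predecessors of its gap elements are distinct positive numbers,
so the maximum of `D` is at least `|D| + A`; building up `D` in increasing order, this gives
`T |D| + T A ≤ ∑ D`. The distinct elements of `R` are counted by `B`, so `T B ≤ ∑ R`. Hence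
`T r + T A + T B ≤ n`, where `r` is the number of part sizes, and equality determines `D` and
`R`.

For `n = T s + 2 T a` with `2 T a ≤ s` this gives `r ≤ s`. If `r < s`, the trivial bound
`A, B ≤ r` already keeps the degree at most `r (r + 1) ≤ s (s - 1)`. If `r = s`, then
`T A + T B ≤ 2 T a`, so `A + B ≤ 2 a` by convexity, with equality only for `A = B = a`, and then the
partition is the one of the equality case. The sixth window is `a = 2`.

Conjugation exchanges the roles of `A` and `B` in the equality case, whence the self-conjugacy.
-/

namespace PartitionDegree

/-- The `m`-th triangular number. -/
def T (m : ℕ) : ℕ := m * (m + 1) / 2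

/-- The number of distinct part sizes of a partition. -/
def supp {n : ℕ} (lam : n.Partition) : ℕ := lam.parts.toFinset.card

/-- The gap-bonus count: distinct part sizes `L ≥ 2` such that `L - 1` is not a part size. -/
def gapBonus {n : ℕ} (lam : n.Partition) : ℕ :=
  (lam.parts.toFinset.filter (fun L => 2 ≤ L ∧ (L - 1) ∉ lam.parts)).card

/-- The multiplicity-bonus count: distinct part sizes occurring with multiplicity at least 2. -/
def multBonus {n : ℕ} (lam : n.Partition) : ℕ :=
  (lam.parts.toFinset.filter (fun L => 2 ≤ lam.parts.count L)).card

/-- The degree of a partition in the partition graph. -/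
def deg {n : ℕ} (lam : n.Partition) : ℕ :=
  supp lam * (supp lam - 1) + gapBonus lam + multBonus lam

/-- The maximal degree over all partitions of `n`. -/
def maxDeg (n : ℕ) : ℕ := Finset.univ.sup (fun lam : n.Partition => deg lam)

/-- `ρ(q)`: the maximum of `a + b` over pairs with `T a + T b ≤ q`. -/
noncomputable def rho (q : ℕ) : ℕ := sSup {c : ℕ | ∃ a b : ℕ, c = a + b ∧ T a + T b ≤ q}

/-- `mu` is the conjugate of `lam`: for each `k ≥ 1`, the multiplicity of `k` in `mu`
equals (number of parts of `lam` that are `≥ k`) minus (number of parts `≥ k + 1`). -/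
def IsConjugate {n : ℕ} (lam mu : n.Partition) : Prop :=
  ∀ k : ℕ, 1 ≤ k →
    mu.parts.count k =
      Multiset.countP (fun p => k ≤ p) lam.parts -
        Multiset.countP (fun p => k + 1 ≤ p) lam.parts

/-! ### Triangular numbers -/

lemma T_zero : T 0 = 0 := rfl

lemma two_mul_T (m : ℕ) : 2 * T m = m * (m + 1) :=
  Nat.mul_div_cancel' (Nat.even_mul_succ_self m).two_dvd

lemma T_succ (m : ℕ) : T (m + 1) = T m + (m + 1) := by
  have h := two_mul_T m
  have h_succ := two_mul_T (m + 1)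
  linarith

lemma T_mono : Monotone T :=
  monotone_nat_of_le_succ fun m => by rw [T_succ]; omega

lemma T_eq_zero_iff {m : ℕ} : T m = 0 ↔ m = 0 := by
  cases m with
  | zero => simp [T_zero]
  | succ m => simp [T_succ]

lemma le_T (m : ℕ) : m ≤ T m := by
  cases m with
  | zero => rfl
  | succ m => rw [T_succ]; omega

lemma sum_Icc_one_eq_T (m : ℕ) : ∑ x ∈ Finset.Icc 1 m, x = T m := by
  induction m with
  | zero => rfl
  | succ m ih => rw [Finset.sum_Icc_succ_top (by omega), ih, T_succ]

lemma add_le_of_T_add_T_le {x y a : ℕ} (h : T x + T y ≤ 2 * T a) : x + y ≤ 2 * a := by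
  have hx := two_mul_T x
  have hy := two_mul_T y
  have ha := two_mul_T a
  zify at *
  nlinarith [sq_nonneg ((x : ℤ) - y)]

lemma eq_and_eq_of_T_add_T_le {x y a : ℕ} (h : T x + T y ≤ 2 * T a) (hxy : x + y = 2 * a) :
    x = a ∧ y = a := by
  have hx := two_mul_T x
  have hy := two_mul_T y
  have ha := two_mul_T a
  have hdiff : ((x : ℤ) - y) ^ 2 ≤ 0 := by
    zify at *
    nlinarith
  have : (x : ℤ) - y = 0 := pow_eq_zero_iff two_ne_zero |>.mp (le_antisymm hdiff (sq_nonneg _))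
  omega

/-! ### Gaps and sums of finite sets -/

/-- The elements `L ≥ 2` of `D` whose predecessor is not in `D`: the part sizes counted by
`gapBonus`, for an arbitrary finite set. -/
def gapSet (D : Finset ℕ) : Finset ℕ := D.filter fun L => 2 ≤ L ∧ L - 1 ∉ D

lemma card_add_card_gapSet_le {D : Finset ℕ} {M : ℕ} (h0 : 0 ∉ D) (hM : ∀ x ∈ D, x ≤ M) :
    D.card + (gapSet D).card ≤ M := by
  have hinj : Set.InjOn (fun L => L - 1) (gapSet D : Set ℕ) := by
    intro x hx y hy hxy
    simp only [gapSet, Finset.coe_filter, Set.mem_ofPred_eq] at hx hy hxy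
    omega
  have hdisj : Disjoint D ((gapSet D).image fun L => L - 1) := by
    rw [Finset.disjoint_right, Finset.forall_mem_image]
    exact fun L hL => (Finset.mem_filter.mp hL).2.2
  have hsub : D ∪ (gapSet D).image (fun L => L - 1) ⊆ Finset.Icc 1 M := by
    intro x hx
    simp only [gapSet, Finset.mem_union, Finset.mem_image, Finset.mem_filter] at hx
    rw [Finset.mem_Icc]
    rcases hx with hx | ⟨L, ⟨hL, hL2, -⟩, rfl⟩
    · exact ⟨Nat.pos_of_ne_zero fun h => h0 (h ▸ hx), hM x hx⟩
    · have := hM L hL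
      omega
  calc D.card + (gapSet D).card
      = (D ∪ (gapSet D).image fun L => L - 1).card := by
        rw [Finset.card_union_of_disjoint hdisj, Finset.card_image_of_injOn hinj]
    _ ≤ (Finset.Icc 1 M).card := Finset.card_le_card hsub
    _ = M := by simp

lemma gapSet_insert_of_lt {D : Finset ℕ} {m : ℕ} (hm : ∀ x ∈ D, x < m) :
    gapSet (insert m D) = if 2 ≤ m ∧ m - 1 ∉ D then insert m (gapSet D) else gapSet D := by
  have hpred : ∀ x ∈ D, x - 1 ≠ m := fun x hx => by have := hm x hx; omega
  ext x
  split_ifs <;> simp only [gapSet, Finset.mem_filter, Finset.mem_insert] <;> grind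

lemma card_gapSet_insert_of_lt {D : Finset ℕ} {m : ℕ} (hm : ∀ x ∈ D, x < m) :
    (gapSet (insert m D)).card =
      (gapSet D).card + if 2 ≤ m ∧ m - 1 ∉ D then 1 else 0 := by
  have hmD : m ∉ gapSet D := fun h => (hm m (Finset.mem_of_mem_filter m h)).false
  rw [gapSet_insert_of_lt hm]
  split_ifs
  · rw [Finset.card_insert_of_notMem hmD]
  · rfl

lemma card_add_card_gapSet_insert_le {D : Finset ℕ} {m : ℕ} (h0 : 0 ∉ insert m D)
    (hm : ∀ x ∈ D, x < m) :
    D.card + 1 + (gapSet (insert m D)).card ≤ m := by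
  rw [← Finset.card_insert_of_notMem fun h => (hm m h).false]
  exact card_add_card_gapSet_le h0 (by simpa using fun x hx => (hm x hx).le)

lemma T_card_add_T_card_gapSet_le_sum {D : Finset ℕ} (h0 : 0 ∉ D) :
    T D.card + T (gapSet D).card ≤ ∑ x ∈ D, x := by
  induction D using Finset.induction_on_max with
  | empty => simp [gapSet, T_zero]
  | insert m D hm ih =>
    have hmD : m ∉ D := fun h => (hm m h).false
    have hmax := card_add_card_gapSet_insert_le h0 hm
    have hsum := ih fun h => h0 (Finset.mem_insert_of_mem h)
    rw [card_gapSet_insert_of_lt hm] at hmax ⊢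
    rw [Finset.card_insert_of_notMem hmD, Finset.sum_insert hmD, T_succ]
    split_ifs at hmax ⊢ <;> simp only [T_succ, add_zero] <;> omega

/-- The set `{1, …, t} ∪ {t + 2, t + 4, …, t + 2a}`: the staircase on `t + a` part sizes whose
gaps are the `a` topmost ones. -/
def gappedStaircase (t : ℕ) : ℕ → Finset ℕ
  | 0 => Finset.Icc 1 t
  | a + 1 => insert (t + 2 * (a + 1)) (gappedStaircase t a)

lemma mem_gappedStaircase {t a x : ℕ} :
    x ∈ gappedStaircase t a ↔
      1 ≤ x ∧ x ≤ t ∨ t < x ∧ x ≤ t + 2 * a ∧ (x - t) % 2 = 0 := by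
  induction a with
  | zero => simp only [gappedStaircase, Finset.mem_Icc]; omega
  | succ a ih => simp only [gappedStaircase, Finset.mem_insert, ih]; omega

lemma lt_of_mem_gappedStaircase {t a x : ℕ} (hx : x ∈ gappedStaircase t a) :
    x < t + 2 * (a + 1) := by
  rw [mem_gappedStaircase] at hx
  omega

lemma notMem_gappedStaircase_top (t a : ℕ) : t + 2 * (a + 1) ∉ gappedStaircase t a :=
  fun h => (lt_of_mem_gappedStaircase h).false

lemma card_gappedStaircase (t a : ℕ) : (gappedStaircase t a).card = t + a := by
  induction a with
  | zero => simp [gappedStaircase]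
  | succ a ih =>
    rw [gappedStaircase, Finset.card_insert_of_notMem (notMem_gappedStaircase_top t a), ih,
      add_assoc]

lemma card_gapSet_gappedStaircase (t a : ℕ) : (gapSet (gappedStaircase t a)).card = a := by
  induction a with
  | zero =>
    rw [Finset.card_eq_zero, gapSet, Finset.filter_eq_empty_iff]
    simp only [mem_gappedStaircase]
    omega
  | succ a ih =>
    rw [gappedStaircase, card_gapSet_insert_of_lt fun x => lt_of_mem_gappedStaircase, ih, if_pos]
    rw [mem_gappedStaircase]
    omega

lemma sum_gappedStaircase (t a : ℕ) :
    ∑ x ∈ gappedStaircase t a, x = T (t + a) + T a := by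
  induction a with
  | zero => simp [gappedStaircase, sum_Icc_one_eq_T, T_zero]
  | succ a ih =>
    rw [gappedStaircase, Finset.sum_insert (notMem_gappedStaircase_top t a), ih, ← add_assoc t,
      T_succ, T_succ]
    ring

lemma eq_gappedStaircase_of_sum_eq {D : Finset ℕ} (h0 : 0 ∉ D)
    (hD : ∑ x ∈ D, x = T D.card + T (gapSet D).card) :
    D = gappedStaircase (D.card - (gapSet D).card) (gapSet D).card := by
  induction D using Finset.induction_on_max with
  | empty => simp [gapSet, gappedStaircase]
  | insert m D hm ih =>
    have hmD : m ∉ D := fun h => (hm m h).false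
    have h0D : 0 ∉ D := fun h => h0 (Finset.mem_insert_of_mem h)
    have hmax := card_add_card_gapSet_insert_le h0 hm
    have hle := T_card_add_T_card_gapSet_le_sum h0D
    have hgap : (gapSet D).card ≤ D.card := Finset.card_filter_le _ _
    rw [card_gapSet_insert_of_lt hm] at hmax hD ⊢
    rw [Finset.card_insert_of_notMem hmD, Finset.sum_insert hmD, T_succ] at hD
    rw [Finset.card_insert_of_notMem hmD]
    split_ifs at hmax hD ⊢
    · rw [T_succ] at hD
      have hm_eq : m = D.card - (gapSet D).card + 2 * ((gapSet D).card + 1) := by omega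
      rw [Nat.add_sub_add_right, gappedStaircase, ← hm_eq, ← ih h0D (by omega)]
    · rw [add_zero] at hD ⊢
      have hgap0 : (gapSet D).card = 0 := by omega
      have hm_eq : m = D.card + 1 := by omega
      have hDeq := ih h0D (by omega)
      rw [hgap0, tsub_zero, gappedStaircase] at hDeq
      rw [hgap0, tsub_zero, gappedStaircase,
        ← Finset.insert_Icc_right_eq_Icc_add_one (by omega), ← hDeq, hm_eq]

lemma eq_Icc_of_sum_eq_T_card {D : Finset ℕ} (h0 : 0 ∉ D) (hD : ∑ x ∈ D, x = T D.card) :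
    D = Finset.Icc 1 D.card := by
  have hle := T_card_add_T_card_gapSet_le_sum h0
  have hgap : (gapSet D).card = 0 := T_eq_zero_iff.mp (by omega)
  have hDeq := eq_gappedStaircase_of_sum_eq h0 (by rw [hgap, T_zero, add_zero, hD])
  rwa [hgap, tsub_zero] at hDeq

/-! ### Repeated elements of a multiset -/

/-- The copies left over when one copy of each element of `M` is set aside; its distinct elements
are the repeated elements of `M`, counted by `multBonus`. -/
def repeats {α : Type*} [DecidableEq α] (M : Multiset α) : Multiset α := M - M.dedup

section Repeats

variable {α : Type*} [DecidableEq α]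

lemma toFinset_val_add_repeats (M : Multiset α) : M.toFinset.val + repeats M = M :=
  add_tsub_cancel_of_le M.dedup_le

lemma mem_repeats {M : Multiset α} {x : α} : x ∈ repeats M ↔ 2 ≤ M.count x := by
  rw [repeats, ← Multiset.count_pos, Multiset.count_sub, Multiset.count_dedup]
  split_ifs with hx
  · omega
  · simp [Multiset.count_eq_zero_of_notMem hx]

end Repeats

lemma zero_notMem_repeats {M : Multiset ℕ} (h0 : 0 ∉ M) : 0 ∉ repeats M :=
  fun h => h0 (Multiset.mem_of_le (Multiset.sub_le_self _ _) h)

lemma sum_toFinset_add_sum_repeats (M : Multiset ℕ) :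
    ∑ x ∈ M.toFinset, x + (repeats M).sum = M.sum := by
  calc ∑ x ∈ M.toFinset, x + (repeats M).sum
      = (M.toFinset.val + repeats M).sum := by simp only [Multiset.sum_add, Finset.sum_val, id]
    _ = M.sum := by rw [toFinset_val_add_repeats]

lemma sum_toFinset_le_sum (M : Multiset ℕ) : ∑ x ∈ M.toFinset, x ≤ M.sum :=
  Nat.le.intro (sum_toFinset_add_sum_repeats M)

lemma toFinset_val_eq_of_sum_eq {M : Multiset ℕ} (h0 : 0 ∉ M)
    (hM : ∑ x ∈ M.toFinset, x = M.sum) : M.toFinset.val = M := by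
  have hsum := sum_toFinset_add_sum_repeats M
  have hzero : ∀ x ∈ repeats M, x = 0 := Multiset.sum_eq_zero_iff.mp (by omega)
  have hempty : repeats M = 0 := Multiset.eq_zero_of_forall_notMem fun x hx =>
    zero_notMem_repeats h0 (hzero x hx ▸ hx)
  rw [← toFinset_val_add_repeats M, hempty]
  simp

lemma T_card_toFinset_le_sum {M : Multiset ℕ} (h0 : 0 ∉ M) : T M.toFinset.card ≤ M.sum := by
  have hgap := T_card_add_T_card_gapSet_le_sum (D := M.toFinset) (by simpa using h0)
  have hsum := sum_toFinset_le_sum M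
  omega

lemma eq_Icc_val_of_sum_eq_T_card {M : Multiset ℕ} (h0 : 0 ∉ M)
    (hM : M.sum = T M.toFinset.card) : M = (Finset.Icc 1 M.toFinset.card).val := by
  have h0' : 0 ∉ M.toFinset := by simpa using h0
  have hgap := T_card_add_T_card_gapSet_le_sum h0'
  have hsum := sum_toFinset_le_sum M
  rw [← eq_Icc_of_sum_eq_T_card h0' (by omega), toFinset_val_eq_of_sum_eq h0 (by omega)]

/-! ### The budget inequality and its equality case -/

section Budget

variable {n : ℕ} (lam : n.Partition)

lemma gapBonus_eq_card_gapSet : gapBonus lam = (gapSet lam.parts.toFinset).card := by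
  simp [gapBonus, gapSet]

lemma multBonus_eq_card_repeats : multBonus lam = (repeats lam.parts).toFinset.card := by
  rw [multBonus]
  congr 1
  ext x
  simp only [Finset.mem_filter, Multiset.mem_toFinset, mem_repeats, and_iff_right_iff_imp]
  exact fun h => Multiset.count_pos.mp (by omega)

lemma gapBonus_le_supp : gapBonus lam ≤ supp lam := Finset.card_filter_le _ _

lemma multBonus_le_supp : multBonus lam ≤ supp lam := Finset.card_filter_le _ _

lemma zero_notMem_parts : 0 ∉ lam.parts := fun h => (lam.parts_pos h).false

lemma T_supp_add_T_gapBonus_le_sum :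
    T (supp lam) + T (gapBonus lam) ≤ ∑ x ∈ lam.parts.toFinset, x := by
  rw [gapBonus_eq_card_gapSet]
  exact T_card_add_T_card_gapSet_le_sum (by simpa using zero_notMem_parts lam)

lemma T_multBonus_le_sum : T (multBonus lam) ≤ (repeats lam.parts).sum := by
  rw [multBonus_eq_card_repeats]
  exact T_card_toFinset_le_sum (zero_notMem_repeats (zero_notMem_parts lam))

lemma sum_toFinset_parts_add_sum_repeats :
    ∑ x ∈ lam.parts.toFinset, x + (repeats lam.parts).sum = n := by
  rw [sum_toFinset_add_sum_repeats, lam.parts_sum]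

lemma T_supp_add_T_gapBonus_add_T_multBonus_le :
    T (supp lam) + T (gapBonus lam) + T (multBonus lam) ≤ n := by
  have hsupp := T_supp_add_T_gapBonus_le_sum lam
  have hmult := T_multBonus_le_sum lam
  have hsum := sum_toFinset_parts_add_sum_repeats lam
  omega

end Budget

/-- The parts of the partition attaining equality in the budget inequality: the part sizes
`{1, …, t} ∪ {t + 2, t + 4, …, t + 2a}`, with a second copy of each of `1, …, b`. -/
def extremalParts (t a b : ℕ) : Multiset ℕ := (gappedStaircase t a).val + (Finset.Icc 1 b).val

lemma parts_eq_extremalParts_of_T_add_eq {n : ℕ} {lam : n.Partition}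
    (h : T (supp lam) + T (gapBonus lam) + T (multBonus lam) = n) :
    lam.parts = extremalParts (supp lam - gapBonus lam) (gapBonus lam) (multBonus lam) := by
  have hsupp := T_supp_add_T_gapBonus_le_sum lam
  have hmult := T_multBonus_le_sum lam
  have hsum := sum_toFinset_parts_add_sum_repeats lam
  have hsizes : ∑ x ∈ lam.parts.toFinset, x = T (supp lam) + T (gapBonus lam) := by omega
  have hrepeats : (repeats lam.parts).sum = T (multBonus lam) := by omega
  rw [gapBonus_eq_card_gapSet] at hsizes ⊢
  rw [multBonus_eq_card_repeats] at hrepeats ⊢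
  rw [extremalParts, supp,
    ← eq_gappedStaircase_of_sum_eq (by simpa using zero_notMem_parts lam) hsizes,
    ← eq_Icc_val_of_sum_eq_T_card (zero_notMem_repeats (zero_notMem_parts lam)) hrepeats,
    toFinset_val_add_repeats]

lemma pos_of_mem_extremalParts {t a b x : ℕ} (hx : x ∈ extremalParts t a b) : 0 < x := by
  simp only [extremalParts, Multiset.mem_add, Finset.mem_val, mem_gappedStaircase,
    Finset.mem_Icc] at hx
  omega

lemma sum_extremalParts (t a b : ℕ) :
    (extremalParts t a b).sum = T (t + a) + T a + T b := by
  calc (extremalParts t a b).sum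
      = ∑ x ∈ gappedStaircase t a, x + ∑ x ∈ Finset.Icc 1 b, x := by
        simp only [extremalParts, Multiset.sum_add, Finset.sum_val, id]
    _ = T (t + a) + T a + T b := by rw [sum_gappedStaircase, sum_Icc_one_eq_T]

lemma toFinset_extremalParts {t a b : ℕ} (hb : b ≤ t) :
    (extremalParts t a b).toFinset = gappedStaircase t a := by
  ext x
  simp only [extremalParts, Multiset.mem_toFinset, Multiset.mem_add, Finset.mem_val,
    mem_gappedStaircase, Finset.mem_Icc]
  omega

lemma repeats_extremalParts {t a b : ℕ} (hb : b ≤ t) :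
    repeats (extremalParts t a b) = (Finset.Icc 1 b).val := by
  have h := toFinset_val_add_repeats (extremalParts t a b)
  rw [toFinset_extremalParts hb] at h
  exact add_left_cancel h

lemma extremalParts_two {s : ℕ} (hs : 2 ≤ s) :
    extremalParts (s - 2) 2 2 = (s + 2) ::ₘ s ::ₘ 2 ::ₘ 1 ::ₘ (Finset.Icc 1 (s - 2)).val := by
  obtain ⟨t, rfl⟩ := Nat.exists_eq_add_of_le' hs
  have hIcc : (Finset.Icc 1 2).val = 2 ::ₘ 1 ::ₘ (0 : Multiset ℕ) := by decide
  rw [Nat.add_sub_cancel, extremalParts, gappedStaircase,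
    Finset.insert_val_of_notMem (notMem_gappedStaircase_top t 1), gappedStaircase,
    Finset.insert_val_of_notMem (notMem_gappedStaircase_top t 0), gappedStaircase,
    Multiset.cons_add, Multiset.cons_add, Multiset.add_comm (Finset.Icc 1 t).val, hIcc,
    Multiset.cons_add, Multiset.cons_add, Multiset.zero_add]

section ExtremalStatistics

variable {n t a b : ℕ} {lam : n.Partition}

lemma supp_of_parts_eq_extremalParts (hb : b ≤ t) (h : lam.parts = extremalParts t a b) :
    supp lam = t + a := by
  rw [supp, h, toFinset_extremalParts hb, card_gappedStaircase]

lemma gapBonus_of_parts_eq_extremalParts (hb : b ≤ t) (h : lam.parts = extremalParts t a b) :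
    gapBonus lam = a := by
  rw [gapBonus_eq_card_gapSet, h, toFinset_extremalParts hb, card_gapSet_gappedStaircase]

lemma multBonus_of_parts_eq_extremalParts (hb : b ≤ t) (h : lam.parts = extremalParts t a b) :
    multBonus lam = b := by
  rw [multBonus_eq_card_repeats, h, repeats_extremalParts hb, Finset.val_toFinset]
  simp

end ExtremalStatistics

/-! ### The maximal degree -/

section Degree

variable {n s a : ℕ} {lam : n.Partition}

lemma supp_le_of_lt_T_succ (hn : n < T (s + 1)) : supp lam ≤ s := by
  have hbudget := T_supp_add_T_gapBonus_add_T_multBonus_le lam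
  by_contra! hs
  have : T (s + 1) ≤ T (supp lam) := T_mono hs
  omega

lemma deg_le_supp_mul_succ : deg lam ≤ supp lam * (supp lam + 1) := by
  have hgap := gapBonus_le_supp lam
  have hmult := multBonus_le_supp lam
  have hsucc : supp lam * (supp lam + 1) = supp lam * (supp lam - 1) + 2 * supp lam := by
    cases supp lam with
    | zero => rfl
    | succ r => rw [Nat.add_sub_cancel]; ring
  rw [deg, hsucc]
  omega

lemma deg_le_of_supp_lt (hlt : supp lam < s) : deg lam ≤ s * (s - 1) := by
  calc deg lam ≤ supp lam * (supp lam + 1) := deg_le_supp_mul_succ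
    _ ≤ (s - 1) * s := Nat.mul_le_mul (by omega) hlt
    _ = s * (s - 1) := mul_comm _ _

lemma T_gapBonus_add_T_multBonus_le (hn : n ≤ T s + 2 * T a) (hsupp : supp lam = s) :
    T (gapBonus lam) + T (multBonus lam) ≤ 2 * T a := by
  have hbudget := T_supp_add_T_gapBonus_add_T_multBonus_le lam
  rw [hsupp] at hbudget
  omega

lemma deg_le (hn : n ≤ T s + 2 * T a) (hs : n < T (s + 1)) : deg lam ≤ s * (s - 1) + 2 * a := by
  rcases (supp_le_of_lt_T_succ hs).lt_or_eq with hlt | heq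
  · exact (deg_le_of_supp_lt hlt).trans (Nat.le_add_right _ _)
  · have := add_le_of_T_add_T_le (T_gapBonus_add_T_multBonus_le hn heq)
    rw [deg, heq]
    omega

lemma deg_eq_iff (ha : 0 < a) (hn : n ≤ T s + 2 * T a) (hs : n < T (s + 1)) :
    deg lam = s * (s - 1) + 2 * a ↔ supp lam = s ∧ gapBonus lam = a ∧ multBonus lam = a := by
  constructor
  · intro hdeg
    have hsupp : supp lam = s := by
      by_contra hne
      have := deg_le_of_supp_lt ((supp_le_of_lt_T_succ hs).lt_of_ne hne)
      omega
    refine ⟨hsupp, eq_and_eq_of_T_add_T_le (T_gapBonus_add_T_multBonus_le hn hsupp) ?_⟩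
    rw [deg, hsupp] at hdeg
    omega
  · rintro ⟨hsupp, hgap, hmult⟩
    rw [deg, hsupp, hgap, hmult]
    ring

end Degree

section Window

variable {s a : ℕ}

lemma le_sub_of_two_mul_T_le (hs : 2 * T a ≤ s) : a ≤ s - a := by
  have := le_T a
  omega

lemma T_add_two_mul_T_lt_T_succ (hs : 2 * T a ≤ s) : T s + 2 * T a < T (s + 1) := by
  rw [T_succ]
  omega

lemma deg_eq_iff_parts_eq_extremalParts (ha : 0 < a) (hs : 2 * T a ≤ s)
    (lam : (T s + 2 * T a).Partition) :
    deg lam = s * (s - 1) + 2 * a ↔ lam.parts = extremalParts (s - a) a a := by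
  have ha_le := le_sub_of_two_mul_T_le hs
  rw [deg_eq_iff ha le_rfl (T_add_two_mul_T_lt_T_succ hs)]
  constructor
  · rintro ⟨hsupp, hgap, hmult⟩
    have h := parts_eq_extremalParts_of_T_add_eq (lam := lam) (by rw [hsupp, hgap, hmult]; ring)
    rwa [hsupp, hgap, hmult] at h
  · intro h
    refine ⟨?_, gapBonus_of_parts_eq_extremalParts ha_le h,
      multBonus_of_parts_eq_extremalParts ha_le h⟩
    rw [supp_of_parts_eq_extremalParts ha_le h]
    omega

lemma exists_parts_eq_extremalParts (hs : 2 * T a ≤ s) :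
    ∃ lam : (T s + 2 * T a).Partition, lam.parts = extremalParts (s - a) a a := by
  have ha_le := le_sub_of_two_mul_T_le hs
  refine ⟨⟨extremalParts (s - a) a a, pos_of_mem_extremalParts, ?_⟩, rfl⟩
  rw [sum_extremalParts, Nat.sub_add_cancel (by omega)]
  ring

lemma maxDeg_eq (ha : 0 < a) (hs : 2 * T a ≤ s) :
    maxDeg (T s + 2 * T a) = s * (s - 1) + 2 * a := by
  refine le_antisymm
    (Finset.sup_le fun lam _ => deg_le le_rfl (T_add_two_mul_T_lt_T_succ hs)) ?_
  obtain ⟨lam, hlam⟩ := exists_parts_eq_extremalParts hs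
  rw [← (deg_eq_iff_parts_eq_extremalParts ha hs lam).mpr hlam]
  exact Finset.le_sup (f := deg) (Finset.mem_univ lam)

end Window

/-! ### Conjugation -/

/-- The Young diagram whose row lengths are the elements of `M` in weakly decreasing order. It
expresses conjugation of partitions as transposition. -/
def youngDiagram (M : Multiset ℕ) : YoungDiagram :=
  YoungDiagram.ofRowLens (M.sort (· ≥ ·)) (M.pairwise_sort (· ≥ ·)).sortedGE

lemma lt_getElem_iff_lt_countP {l : List ℕ} (hl : l.SortedGE) (i j : ℕ) :
    (∃ h : i < l.length, j < l[i]) ↔ i < l.countP (j < ·) := by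
  induction l generalizing i with
  | nil => simp
  | cons x l ih =>
    have hx : ∀ y ∈ l, y ≤ x := (List.pairwise_cons.mp hl.pairwise).1
    have hl' : l.SortedGE := (List.pairwise_cons.mp hl.pairwise).2.sortedGE
    by_cases hj : j < x
    · cases i with
      | zero => simp [hj]
      | succ i => simpa [hj] using ih hl' i
    · have hle : ∀ y ∈ x :: l, y ≤ j :=
        List.forall_mem_cons.mpr ⟨not_lt.mp hj, fun y hy => (hx y hy).trans (not_lt.mp hj)⟩
      have hcount : (x :: l).countP (j < ·) = 0 := by simpa [List.countP_eq_zero] using hle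
      rw [hcount]
      simp only [not_lt_zero, iff_false, not_exists, not_lt]
      exact fun h => hle _ (List.getElem_mem h)

lemma mk_mem_youngDiagram_iff {M : Multiset ℕ} {i j : ℕ} :
    (i, j) ∈ youngDiagram M ↔ i < M.countP (j < ·) := by
  rw [youngDiagram, YoungDiagram.mem_ofRowLens, lt_getElem_iff_lt_countP
    (M.pairwise_sort (· ≥ ·)).sortedGE, ← Multiset.coe_countP, Multiset.sort_eq]

lemma countP_lt_Icc_one (m k : ℕ) : (Finset.Icc 1 m).val.countP (k < ·) = m - k := by
  have hfilter : (Finset.Icc 1 m).filter (k < ·) = Finset.Icc (k + 1) m := by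
    ext x
    simp only [Finset.mem_filter, Finset.mem_Icc]
    omega
  rw [Multiset.countP_eq_card_filter, ← Finset.filter_val, Finset.card_val, hfilter, Nat.card_Icc,
    Nat.add_sub_add_right]

lemma countP_lt_gappedStaircase (t a k : ℕ) :
    (gappedStaircase t a).val.countP (k < ·) = (t - k) + (a - (k - t) / 2) := by
  induction a with
  | zero => simp [gappedStaircase, countP_lt_Icc_one]
  | succ a ih =>
    rw [gappedStaircase, Finset.insert_val_of_notMem (notMem_gappedStaircase_top t a),
      Multiset.countP_cons, ih]
    split_ifs <;> omega

lemma countP_lt_extremalParts (t a b k : ℕ) :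
    (extremalParts t a b).countP (k < ·) = (t - k) + (a - (k - t) / 2) + (b - k) := by
  rw [extremalParts, Multiset.countP_add, countP_lt_gappedStaircase, countP_lt_Icc_one]

lemma transpose_youngDiagram_extremalParts {s a b : ℕ} (hab : a + b ≤ s) :
    (youngDiagram (extremalParts (s - a) a b)).transpose =
      youngDiagram (extremalParts (s - b) b a) := by
  ext ⟨i, j⟩
  rw [YoungDiagram.mem_cells, YoungDiagram.mem_cells, YoungDiagram.mem_transpose, Prod.swap_prod_mk,
    mk_mem_youngDiagram_iff, mk_mem_youngDiagram_iff, countP_lt_extremalParts,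
    countP_lt_extremalParts]
  omega

lemma countP_le_eq_count_add_countP_succ_le (M : Multiset ℕ) (k : ℕ) :
    M.countP (k ≤ ·) = M.count k + M.countP (k + 1 ≤ ·) := by
  induction M using Multiset.induction_on with
  | empty => simp
  | cons x M ih =>
    simp only [Multiset.countP_cons, Multiset.count_cons, ih]
    split_ifs <;> omega

/-- Pitfall: the difference in `IsConjugate` counts the parts of `lam` equal to `k`, so
`IsConjugate lam mu` only says that `lam` and `mu` have the same parts. Conjugation in the usual
sense is `YoungDiagram.transpose`. -/
lemma isConjugate_self {n : ℕ} (lam : n.Partition) : IsConjugate lam lam := fun k _ => by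
  rw [countP_le_eq_count_add_countP_succ_le, Nat.add_sub_cancel]

/-! ### The windows `n = T s + 2 T a` -/

theorem sixth_window_general {s a : ℕ} (ha : 0 < a) (hs : 2 * T a ≤ s)
    (lam : (T s + 2 * T a).Partition) :
    (deg lam = maxDeg (T s + 2 * T a) ↔ lam.parts = extremalParts (s - a) a a) ∧
      (lam.parts = extremalParts (s - a) a a →
        gapBonus lam = a ∧ multBonus lam = a ∧
          (youngDiagram lam.parts).transpose = youngDiagram lam.parts) := by
  have ha_le := le_sub_of_two_mul_T_le hs
  refine ⟨by rw [maxDeg_eq ha hs, deg_eq_iff_parts_eq_extremalParts ha hs], fun h => ?_⟩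
  exact ⟨gapBonus_of_parts_eq_extremalParts ha_le h, multBonus_of_parts_eq_extremalParts ha_le h,
    by rw [h, transpose_youngDiagram_extremalParts (by omega)]⟩

/-- for `n = T s + 6` with `s ≥ 6`, the unique maximizer is
`(s+2, s, s-2, s-3, …, 2, 2, 1, 1)`; it has `A = B = 2` and is self-conjugate. -/
theorem sixth_window (s : ℕ) (hs : 6 ≤ s) :
    (∀ lam : (T s + 6).Partition,
        deg lam = maxDeg (T s + 6) ↔
          lam.parts = (s + 2) ::ₘ s ::ₘ 2 ::ₘ 1 ::ₘ (Finset.Icc 1 (s - 2)).val) ∧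
      (∀ lam : (T s + 6).Partition,
        lam.parts = (s + 2) ::ₘ s ::ₘ 2 ::ₘ 1 ::ₘ (Finset.Icc 1 (s - 2)).val →
          gapBonus lam = 2 ∧ multBonus lam = 2 ∧ IsConjugate lam lam) := by
  have hwindow := fun lam : (T s + 6).Partition => sixth_window_general (a := 2) two_pos hs lam
  rw [← extremalParts_two (by omega)]
  refine ⟨fun lam => (hwindow lam).1, fun lam h => ?_⟩
  obtain ⟨hgap, hmult, -⟩ := (hwindow lam).2 h
  exact ⟨hgap, hmult, isConjugate_self lam⟩

end PartitionDegree
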